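/- (Theorem 3.2, part 2.) There exists σ₀ > 0 such that for every σ ≥ σ₀ the following holds. For every global minimizer Z* of the penalized problem (P_β) there exist ε > 0 and δ > 0 such that: if {Z^(k)} ⊆ (ℝ^{K×K})^{N−1} is a sequence with block-optimal sequence {Z̄^(k)} satisfying (i) {f_β(Z̄^(k))} is nonincreasing, with limit F̄, and f_β(Z̄^(k)) > F̄ for all k ≥ 1, (ii) Σ_{k=1}^∞ ‖Z̄^(k) − Z^(k)‖_F ≤ δ, and (iii) Z^(0) ∈ S^{N−1} with ‖Z^(0) − Z*‖_F < ε, then {Z^(k)} converges to a global minimizer of (P_β). -/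

import Mathlib

open Matrix Finset Filter Topology

noncomputable section

/-- Trace inner product `⟨A,B⟩ = Tr(AᵀB)` on `K×K` real matrices. -/
def mip {K : ℕ} (A B : Matrix (Fin K) (Fin K) ℝ) : ℝ := (Aᵀ * B).trace

/-- The section `S = {W : We = 𝟙, WᵀΞϱ = ϱ, Tr W = 0, W ≥ 0}` of the feasible region. -/
def Sset {K : ℕ} (e ϱ : Fin K → ℝ) : Set (Matrix (Fin K) (Fin K) ℝ) :=
  {W | W.mulVec e = (fun _ => 1) ∧ Wᵀ.mulVec (fun j => e j * ϱ j) = ϱ ∧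
    W.trace = 0 ∧ ∀ a b, 0 ≤ W a b}

/-- The discretized repulsive energy
`f(Z) = Σ_i ⟨X_i, ΛΞCΞ⟩ + Σ_{i<j} ⟨X_i, ΞΛX_jΞCΞ⟩` (blocks indexed by `Fin m`, `m = N−1`). -/
def fE {K m : ℕ} (e ϱ : Fin K → ℝ) (C : Matrix (Fin K) (Fin K) ℝ)
    (Z : Fin m → Matrix (Fin K) (Fin K) ℝ) : ℝ :=
  (∑ i, mip (Z i) (diagonal ϱ * diagonal e * C * diagonal e)) +
    ∑ i, ∑ j ∈ Finset.Ioi i,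
      mip (Z i) (diagonal e * diagonal ϱ * Z j * diagonal e * C * diagonal e)

/-- The `ℓ₁`-penalized energy `f_β(Z) = f(Z) + β Σ_{i<j} ⟨X_i, X_j⟩`. -/
def fB {K m : ℕ} (e ϱ : Fin K → ℝ) (C : Matrix (Fin K) (Fin K) ℝ) (β : ℝ)
    (Z : Fin m → Matrix (Fin K) (Fin K) ℝ) : ℝ :=
  fE e ϱ C Z + β * ∑ i, ∑ j ∈ Finset.Ioi i, mip (Z i) (Z j)

/-- The block gradient
`∇_{X_i} f_β(Z) = ΛΞCΞ + Σ_{j<i} ΛΞX_jΞCΞ + Σ_{j>i} ΞΛX_jΞCΞ + β Σ_{j≠i} X_j`. -/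
def gradB {K m : ℕ} (e ϱ : Fin K → ℝ) (C : Matrix (Fin K) (Fin K) ℝ) (β : ℝ)
    (Z : Fin m → Matrix (Fin K) (Fin K) ℝ) (i : Fin m) : Matrix (Fin K) (Fin K) ℝ :=
  diagonal ϱ * diagonal e * C * diagonal e
    + ∑ j ∈ Finset.Iio i, diagonal ϱ * diagonal e * Z j * diagonal e * C * diagonal e
    + ∑ j ∈ Finset.Ioi i, diagonal e * diagonal ϱ * Z j * diagonal e * C * diagonal e
    + β • ∑ j ∈ Finset.univ.erase i, Z j

/-- `Z* ∈ S^{N−1}` is a KKT point of the penalized problem `(P_β)` if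
`⟨∇_{X_i} f_β(Z*), X − X*_i⟩ ≥ 0` for all `X ∈ S` and all blocks `i`. -/
def IsKKT {K m : ℕ} (e ϱ : Fin K → ℝ) (C : Matrix (Fin K) (Fin K) ℝ) (β : ℝ)
    (Z : Fin m → Matrix (Fin K) (Fin K) ℝ) : Prop :=
  (∀ i, Z i ∈ Sset e ϱ) ∧
    ∀ i, ∀ X ∈ Sset e ϱ, 0 ≤ mip (gradB e ϱ C β Z i) (X - Z i)

/-- The `i`-th block objective of PBCD at outer iterate `Zold` (with the already-updated
blocks taken from `Znew`):
`X ↦ f_β(Znew_{<i}, X, Zold_{>i}) + (σ/2)‖X − Zold_i‖_F²`. -/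
def blockObj {K m : ℕ} (e ϱ : Fin K → ℝ) (C : Matrix (Fin K) (Fin K) ℝ) (β σ : ℝ)
    (Zold Znew : Fin m → Matrix (Fin K) (Fin K) ℝ) (i : Fin m)
    (X : Matrix (Fin K) (Fin K) ℝ) : ℝ :=
  fB e ϱ C β (fun j => if j < i then Znew j else if j = i then X else Zold j)
    + σ / 2 * mip (X - Zold i) (X - Zold i)

/-- `Zseq` is an exact PBCD sequence: for every `k` and every block `i` (in order),
`X_i^{(k+1)}` is the (unique) global solution of the `i`-th block problem. -/
def IsPBCD {K m : ℕ} (e ϱ : Fin K → ℝ) (C : Matrix (Fin K) (Fin K) ℝ) (β σ : ℝ)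
    (Zseq : ℕ → Fin m → Matrix (Fin K) (Fin K) ℝ) : Prop :=
  ∀ k i, Zseq (k + 1) i ∈ Sset e ϱ ∧
    ∀ X ∈ Sset e ϱ,
      blockObj e ϱ C β σ (Zseq k) (Zseq (k + 1)) i (Zseq (k + 1) i) ≤
        blockObj e ϱ C β σ (Zseq k) (Zseq (k + 1)) i X

/-- `Zbar` is the block-optimal sequence of `Zseq`: `X̄_i^{(k+1)}` is the (unique) global
solution of the `i`-th block problem built from the iterates of `Zseq` themselves. -/
def IsBlockOpt {K m : ℕ} (e ϱ : Fin K → ℝ) (C : Matrix (Fin K) (Fin K) ℝ) (β σ : ℝ)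
    (Zseq Zbar : ℕ → Fin m → Matrix (Fin K) (Fin K) ℝ) : Prop :=
  ∀ k i, Zbar (k + 1) i ∈ Sset e ϱ ∧
    ∀ X ∈ Sset e ϱ,
      blockObj e ϱ C β σ (Zseq k) (Zseq (k + 1)) i (Zbar (k + 1) i) ≤
        blockObj e ϱ C β σ (Zseq k) (Zseq (k + 1)) i X

/-- Frobenius norm of a block tuple `Z ∈ (ℝ^{K×K})^m`. -/
def nZ {K m : ℕ} (Z : Fin m → Matrix (Fin K) (Fin K) ℝ) : ℝ :=
  Real.sqrt (∑ i, mip (Z i) (Z i))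

/-!
The energy `f_β` is a quadratic function on a polyhedron. On the affine hull of a face,
near-critical points of a quadratic function have values close to a single critical value. There are
finitely many faces, so for every level `F` there is an `η > 0` with `f_β - F ≤ c τ ^ 2` at all
feasible points below level `F + η` that are first-order stationary up to `τ`.

Each inexact proximal sweep yields a point that is stationary up to a multiple of the step length
plus the inexactness, and decreases `f_β` by a multiple of the squared step length up to an error
term. With `F` the minimum value, the two estimates make `√(f_β - F)` telescope and dominate the
step lengths, so the summable errors force summable steps and convergence to a point of value `F`.
Starting near a global minimizer with small total error places the block-optimal points below
`F + η`.
-/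

section Quadratic

variable {E : Type*} [NormedAddCommGroup E] [NormedSpace ℝ E]

/-- The quadratic function `x ↦ g x + B x x`; the bilinear form `B` need not be symmetric. -/
def quad (g : E →L[ℝ] ℝ) (B : E →L[ℝ] E →L[ℝ] ℝ) (x : E) : ℝ := g x + B x x

/-- The Fréchet derivative of `quad g B` at `x`. -/
def quadDeriv (g : E →L[ℝ] ℝ) (B : E →L[ℝ] E →L[ℝ] ℝ) (x : E) : E →L[ℝ] ℝ := g + (B + B.flip) x

lemma continuous_quad (g : E →L[ℝ] ℝ) (B : E →L[ℝ] E →L[ℝ] ℝ) : Continuous (quad g B) := by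
  unfold quad
  fun_prop

lemma quadDeriv_add (g : E →L[ℝ] ℝ) (B : E →L[ℝ] E →L[ℝ] ℝ) (x u : E) :
    quadDeriv g B (x + u) = quadDeriv g B x + (B + B.flip) u := by
  simp only [quadDeriv, map_add, add_assoc]

lemma quad_add (g : E →L[ℝ] ℝ) (B : E →L[ℝ] E →L[ℝ] ℝ) (x u : E) :
    quad g B (x + u) = quad g B x + quadDeriv g B x u + B u u := by
  simp only [quad, quadDeriv, map_add, _root_.add_apply, ContinuousLinearMap.flip_apply]
  ring

lemma quad_add_subtype (g : E →L[ℝ] ℝ) (B : E →L[ℝ] E →L[ℝ] ℝ) (U : Submodule ℝ E) (x : E)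
    (u : U) :
    quad g B (x + u) = quad g B x +
      quad (quadDeriv g B x ∘L U.subtypeL) (B.bilinearComp U.subtypeL U.subtypeL) u := by
  rw [quad_add]
  simp [quad, add_assoc]

lemma quadDeriv_add_subtype (g : E →L[ℝ] ℝ) (B : E →L[ℝ] E →L[ℝ] ℝ) (U : Submodule ℝ E) (x : E)
    (u : U) :
    quadDeriv g B (x + u) ∘L U.subtypeL =
      quadDeriv (quadDeriv g B x ∘L U.subtypeL) (B.bilinearComp U.subtypeL U.subtypeL) u := by
  ext w
  simp only [quadDeriv, _root_.add_apply, map_add, ContinuousLinearMap.add_comp,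
    ContinuousLinearMap.comp_apply, Submodule.coe_subtypeL, Submodule.subtype_apply,
    ContinuousLinearMap.flip_apply, ContinuousLinearMap.bilinearComp_apply]
  ring

/-- A Lipschitz constant of `quadDeriv g B`. -/
def quadLip (B : E →L[ℝ] E →L[ℝ] ℝ) : ℝ := ‖B + B.flip‖

lemma quadLip_nonneg (B : E →L[ℝ] E →L[ℝ] ℝ) : 0 ≤ quadLip B := norm_nonneg (B + B.flip)

lemma abs_quadDeriv_sub_apply_le (g : E →L[ℝ] ℝ) (B : E →L[ℝ] E →L[ℝ] ℝ) (x y u : E) :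
    |quadDeriv g B x u - quadDeriv g B y u| ≤ quadLip B * ‖x - y‖ * ‖u‖ := by
  have hdiff : quadDeriv g B x u - quadDeriv g B y u = (B + B.flip) (x - y) u := by
    rw [← add_sub_cancel y x, quadDeriv_add, _root_.add_apply, add_sub_cancel_left,
      add_sub_cancel_left]
  rw [hdiff]
  exact (B + B.flip).le_opNorm₂ _ _

lemma exists_bounded_lift [FiniteDimensional ℝ E] {G : Type*} [NormedAddCommGroup G]
    [NormedSpace ℝ G] (T : E →L[ℝ] G) :
    ∃ c : ℝ, 0 ≤ c ∧ ∀ x, ∃ y, T y = T x ∧ ‖y‖ ≤ c * ‖T x‖ := by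
  have : CompleteSpace E := FiniteDimensional.complete ℝ E
  have : CompleteSpace T.range := FiniteDimensional.complete ℝ _
  obtain ⟨c, hc, hlift⟩ :=
    T.rangeRestrict.exists_preimage_norm_le T.toLinearMap.surjective_rangeRestrict
  refine ⟨c, hc.le, fun x => ?_⟩
  obtain ⟨y, hy, hle⟩ := hlift (T.rangeRestrict x)
  exact ⟨y, congrArg Subtype.val hy, hle⟩

lemma abs_quad_sub_le_of_quadDeriv_eq_zero [FiniteDimensional ℝ E] {g : E →L[ℝ] ℝ}
    {B : E →L[ℝ] E →L[ℝ] ℝ} {x₀ : E} (hx₀ : quadDeriv g B x₀ = 0) :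
    ∃ c : ℝ, 0 ≤ c ∧ ∀ x, |quad g B x - quad g B x₀| ≤ c * ‖quadDeriv g B x‖ ^ 2 := by
  obtain ⟨c, hc, hlift⟩ := exists_bounded_lift (B + B.flip)
  refine ⟨c, hc, fun x => ?_⟩
  obtain ⟨w, rfl⟩ : ∃ w, x = x₀ + w := ⟨x - x₀, by abel⟩
  obtain ⟨y, hy, hyc⟩ := hlift w
  have hsymm : ∀ a b, (B + B.flip) a b = (B + B.flip) b a := fun a b => by
    simp [add_comm]
  have hvalue : 2 * (quad g B (x₀ + w) - quad g B x₀) = (B + B.flip) w y := by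
    rw [hsymm w y, hy, quad_add, hx₀]
    simp only [_root_.zero_apply, add_zero, add_sub_cancel_left, _root_.add_apply,
      ContinuousLinearMap.flip_apply]
    ring
  have hle : |(B + B.flip) w y| ≤ ‖(B + B.flip) w‖ * (c * ‖(B + B.flip) w‖) :=
    (((B + B.flip) w).le_opNorm y).trans (by gcongr)
  rw [← hvalue, abs_mul, abs_two] at hle
  rw [quadDeriv_add, hx₀, zero_add]
  nlinarith [abs_nonneg (quad g B (x₀ + w) - quad g B x₀)]

lemma exists_pos_le_norm_quadDeriv [FiniteDimensional ℝ E] {g : E →L[ℝ] ℝ}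
    {B : E →L[ℝ] E →L[ℝ] ℝ} (h : ∀ x, quadDeriv g B x ≠ 0) :
    ∃ c : ℝ, 0 < c ∧ ∀ x, c ≤ ‖quadDeriv g B x‖ := by
  set R := (B + B.flip).range
  have hclosed : IsClosed (R : Set (E →L[ℝ] ℝ)) := R.closed_of_finiteDimensional
  have hg : -g ∉ (R : Set (E →L[ℝ] ℝ)) := by
    rintro ⟨x, hx⟩
    refine h x ?_
    have hx' : (B + B.flip) x = -g := hx
    rw [quadDeriv, hx', add_neg_cancel]
  refine ⟨_, (hclosed.notMem_iff_infDist_pos R.nonempty).1 hg, fun x => ?_⟩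
  have hmem : (B + B.flip) x ∈ (R : Set (E →L[ℝ] ℝ)) := ⟨x, rfl⟩
  refine (Metric.infDist_le_dist_of_mem hmem).trans_eq ?_
  rw [dist_comm, dist_eq_norm, sub_neg_eq_add, add_comm, quadDeriv]

/-- All critical points share one value, which serves as `v`; if there are none, the derivative is
bounded away from zero and no point passes the threshold `r`. -/
lemma exists_abs_quad_sub_le [FiniteDimensional ℝ E] (g : E →L[ℝ] ℝ) (B : E →L[ℝ] E →L[ℝ] ℝ) :
    ∃ v r c : ℝ, 0 < r ∧ 0 ≤ c ∧
      ∀ x, ‖quadDeriv g B x‖ < r → |quad g B x - v| ≤ c * ‖quadDeriv g B x‖ ^ 2 := by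
  by_cases h : ∃ x₀, quadDeriv g B x₀ = 0
  · obtain ⟨x₀, hx₀⟩ := h
    obtain ⟨c, hc, hle⟩ := abs_quad_sub_le_of_quadDeriv_eq_zero hx₀
    exact ⟨quad g B x₀, 1, c, one_pos, hc, fun x _ => hle x⟩
  · obtain ⟨r, hr, hle⟩ := exists_pos_le_norm_quadDeriv (not_exists.1 h)
    exact ⟨0, r, 0, hr, le_rfl, fun x hx => absurd hx (hle x).not_gt⟩

lemma exists_abs_quad_sub_le_on_coset [FiniteDimensional ℝ E] (g : E →L[ℝ] ℝ)
    (B : E →L[ℝ] E →L[ℝ] ℝ) (U : Submodule ℝ E) (x₀ : E) :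
    ∃ v r c : ℝ, 0 < r ∧ 0 ≤ c ∧ ∀ x, x - x₀ ∈ U → ‖quadDeriv g B x ∘L U.subtypeL‖ < r →
      |quad g B x - v| ≤ c * ‖quadDeriv g B x ∘L U.subtypeL‖ ^ 2 := by
  obtain ⟨v, r, c, hr, hc, hle⟩ := exists_abs_quad_sub_le (quadDeriv g B x₀ ∘L U.subtypeL)
    (B.bilinearComp U.subtypeL U.subtypeL)
  refine ⟨quad g B x₀ + v, r, c, hr, hc, fun x hx => ?_⟩
  obtain ⟨u, rfl⟩ : ∃ u : U, x = x₀ + u := ⟨⟨x - x₀, hx⟩, by simp⟩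
  rw [quadDeriv_add_subtype, quad_add_subtype, add_sub_add_left_eq_sub]
  exact hle u

end Quadratic

section Polyhedron

open Module

variable {E F : Type*} [AddCommGroup E] [Module ℝ E] [AddCommGroup F] [Module ℝ F]

/-- A polyhedron: the solution set of finitely many affine inequalities. The pair `(a, b)` encodes
the inequality `b ≤ a x`. -/
def IsPolyhedron (P : Set E) : Prop :=
  ∃ A : Set (Dual ℝ E × ℝ), A.Finite ∧ P = {x | ∀ p ∈ A, p.2 ≤ p.1 x}

lemma isPolyhedron_setOf_le (a : Dual ℝ E) (b : ℝ) : IsPolyhedron {x | b ≤ a x} :=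
  ⟨{(a, b)}, Set.finite_singleton _, by simp⟩

lemma IsPolyhedron.iInter {ι : Type*} [Finite ι] {P : ι → Set E} (h : ∀ i, IsPolyhedron (P i)) :
    IsPolyhedron (⋂ i, P i) := by
  choose A hA hP using h
  refine ⟨⋃ i, A i, Set.finite_iUnion hA, ?_⟩
  ext x
  simp only [hP, Set.mem_iInter, Set.mem_ofPred_eq, Set.mem_iUnion, forall_exists_index]
  exact forall_comm

lemma IsPolyhedron.inter {P Q : Set E} (hP : IsPolyhedron P) (hQ : IsPolyhedron Q) :
    IsPolyhedron (P ∩ Q) := by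
  rw [Set.inter_eq_iInter]
  exact .iInter (Bool.forall_bool.2 ⟨hQ, hP⟩)

lemma IsPolyhedron.preimage {P : Set F} (hP : IsPolyhedron P) (T : E →ₗ[ℝ] F) :
    IsPolyhedron (T ⁻¹' P) := by
  obtain ⟨A, hA, rfl⟩ := hP
  exact ⟨(fun p => (T.dualMap p.1, p.2)) '' A, hA.image _, by simp only [Set.forall_mem_image]; rfl⟩

lemma IsPolyhedron.pi {ι : Type*} [Finite ι] {S : Set E} (hS : IsPolyhedron S) :
    IsPolyhedron {x : ι → E | ∀ i, x i ∈ S} := by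
  have hpi : {x : ι → E | ∀ i, x i ∈ S} =
      ⋂ i, LinearMap.proj (R := ℝ) (φ := fun _ => E) i ⁻¹' S := by
    ext x
    simp
  rw [hpi]
  exact .iInter fun i => hS.preimage _

lemma isPolyhedron_setOf_eq (a : Dual ℝ E) (b : ℝ) : IsPolyhedron {x | a x = b} := by
  convert (isPolyhedron_setOf_le a b).inter (isPolyhedron_setOf_le (-a) (-b)) using 1
  ext x
  simp [le_antisymm_iff, and_comm]

lemma isPolyhedron_setOf_eq_pi {ι : Type*} [Finite ι] (T : E →ₗ[ℝ] ι → ℝ) (y : ι → ℝ) :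
    IsPolyhedron {x | T x = y} := by
  convert IsPolyhedron.iInter fun i => isPolyhedron_setOf_eq (LinearMap.proj i ∘ₗ T) (y i)
  ext x
  simp [funext_iff]

lemma IsPolyhedron.convex {P : Set E} (hP : IsPolyhedron P) : Convex ℝ P := by
  obtain ⟨A, -, rfl⟩ := hP
  simp only [Set.ofPred_forall]
  exact convex_iInter₂ fun p _ => convex_halfSpace_ge p.1.isLinear p.2

/-- The constraints of the system `A` that hold with equality at `x`. -/
def activeSet (A : Set (Dual ℝ E × ℝ)) (x : E) : Set (Dual ℝ E × ℝ) := {p ∈ A | p.1 x = p.2}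

/-- The directions along which every constraint of `s` is constant: for `s = activeSet A x`, the
direction space of the minimal face through `x`. -/
def faceDirections (s : Set (Dual ℝ E × ℝ)) : Submodule ℝ E := ⨅ p ∈ s, LinearMap.ker p.1

lemma mem_faceDirections {s : Set (Dual ℝ E × ℝ)} {u : E} :
    u ∈ faceDirections s ↔ ∀ p ∈ s, p.1 u = 0 := by
  simp [faceDirections]

lemma sub_mem_faceDirections {A : Set (Dual ℝ E × ℝ)} {x y : E}
    (h : activeSet A x = activeSet A y) : x - y ∈ faceDirections (activeSet A x) := by
  refine mem_faceDirections.2 fun p hp => ?_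
  have hx : p.1 x = p.2 := hp.2
  have hy : p.1 y = p.2 := (h ▸ hp : p ∈ activeSet A y).2
  rw [map_sub, hx, hy, sub_self]

lemma eventually_add_smul_mem {A : Set (Dual ℝ E × ℝ)} (hA : A.Finite) {x u : E}
    (hx : ∀ p ∈ A, p.2 ≤ p.1 x) (hu : u ∈ faceDirections (activeSet A x)) :
    ∀ᶠ t : ℝ in 𝓝 0, ∀ p ∈ A, p.2 ≤ p.1 (x + t • u) := by
  refine (Set.Finite.eventually_all hA).2 fun p hp => ?_
  rcases (hx p hp).eq_or_lt with hactive | hslack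
  · have hzero : p.1 u = 0 := mem_faceDirections.1 hu p ⟨hp, hactive.symm⟩
    simp [hzero, hactive]
  · have hcont : Tendsto (fun t : ℝ => p.1 x + t * p.1 u) (𝓝 0) (𝓝 (p.1 x)) :=
      Continuous.tendsto' (by fun_prop) _ _ (by simp)
    filter_upwards [hcont.eventually_const_lt hslack] with t ht
    simpa using ht.le

end Polyhedron

lemma IsPolyhedron.isClosed {E : Type*} [NormedAddCommGroup E] [NormedSpace ℝ E]
    [FiniteDimensional ℝ E] {P : Set E} (hP : IsPolyhedron P) : IsClosed P := by
  obtain ⟨A, -, rfl⟩ := hP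
  simp only [Set.ofPred_forall]
  exact isClosed_biInter fun p _ =>
    isClosed_le continuous_const p.1.continuous_of_finiteDimensional

section ErrorBound

variable {E : Type*} [NormedAddCommGroup E] [NormedSpace ℝ E]

/-- First-order stationarity of `x` on `P` up to an error `τ`, for a function whose derivative at
`x` is `D`: the directional derivative towards any point of `P` is at least `-τ` per unit length. -/
def IsApproxStationary (P : Set E) (D : E →L[ℝ] ℝ) (τ : ℝ) (x : E) : Prop :=
  ∀ y ∈ P, -(τ * ‖y - x‖) ≤ D (y - x)

lemma IsApproxStationary.norm_comp_subtypeL_le {A : Set (Module.Dual ℝ E × ℝ)} (hA : A.Finite)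
    {D : E →L[ℝ] ℝ} {τ : ℝ} (hτ : 0 ≤ τ) {x : E} (hx : ∀ p ∈ A, p.2 ≤ p.1 x)
    (h : IsApproxStationary {y | ∀ p ∈ A, p.2 ≤ p.1 y} D τ x) :
    ‖D ∘L (faceDirections (activeSet A x)).subtypeL‖ ≤ τ := by
  have hlower : ∀ u ∈ faceDirections (activeSet A x), -(τ * ‖u‖) ≤ D u := by
    intro u hu
    obtain ⟨t, hmem, ht⟩ := ((eventually_add_smul_mem hA hx hu).filter_mono
      nhdsWithin_le_nhds |>.and (self_mem_nhdsWithin (s := Set.Ioi 0))).exists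
    have hstep := h _ hmem
    rw [add_sub_cancel_left, norm_smul, Real.norm_of_nonneg ht.le, map_smul, smul_eq_mul] at hstep
    refine le_of_mul_le_mul_left ?_ ht
    linarith
  refine ContinuousLinearMap.opNorm_le_bound _ hτ fun u => abs_le.2 ⟨hlower u u.2, ?_⟩
  have hneg := hlower (-u) (neg_mem u.2)
  rw [norm_neg, map_neg] at hneg
  exact neg_le_neg_iff.1 hneg

lemma sub_le_mul_sq_of_value_gap {F v η r c y τ : ℝ} (hη : 0 < η) (hr : 0 < r) (hc : 0 ≤ c)
    (hgap : v ≤ F ∨ F + 2 * η ≤ v) (hy : y < F + η) (hv : τ < r → |y - v| ≤ c * τ ^ 2) :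
    y - F ≤ (c + η / r ^ 2) * τ ^ 2 := by
  have hfar : 0 ≤ η / r ^ 2 * τ ^ 2 := by positivity
  have hnear : 0 ≤ c * τ ^ 2 := by positivity
  rw [add_mul]
  rcases lt_or_ge τ r with hlt | hge
  · obtain ⟨hlow, hupp⟩ := abs_le.1 (hv hlt)
    rcases hgap with h | h <;> linarith
  · have hη' : η ≤ η / r ^ 2 * τ ^ 2 := by
      rw [div_mul_eq_mul_div, le_div_iff₀ (by positivity)]
      gcongr
    linarith

lemma eventually_value_gap (v F : ℝ) : ∀ᶠ η in 𝓝[>] (0 : ℝ), v ≤ F ∨ F + 2 * η ≤ v := by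
  rcases le_or_gt v F with h | h
  · exact .of_forall fun _ => .inl h
  · filter_upwards [Ioc_mem_nhdsGT (half_pos (sub_pos.2 h))] with η hη
    exact .inr (by linarith [hη.2])

variable [FiniteDimensional ℝ E]

lemma eventually_sub_le_mul_sq_on_face (g : E →L[ℝ] ℝ) (B : E →L[ℝ] E →L[ℝ] ℝ)
    {A : Set (Module.Dual ℝ E × ℝ)} (hA : A.Finite) (s : Set (Module.Dual ℝ E × ℝ)) (F : ℝ) :
    ∀ᶠ η in 𝓝[>] (0 : ℝ), ∀ᶠ c in atTop, ∀ x, (∀ p ∈ A, p.2 ≤ p.1 x) → activeSet A x = s →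
      quad g B x < F + η → ∀ τ, 0 ≤ τ →
      IsApproxStationary {y | ∀ p ∈ A, p.2 ≤ p.1 y} (quadDeriv g B x) τ x →
      quad g B x - F ≤ c * τ ^ 2 := by
  by_cases hs : ∃ x₀, activeSet A x₀ = s
  · obtain ⟨x₀, rfl⟩ := hs
    obtain ⟨v, r, c₀, hr, hc₀, hcrit⟩ :=
      exists_abs_quad_sub_le_on_coset g B (faceDirections (activeSet A x₀)) x₀
    filter_upwards [eventually_value_gap v F, self_mem_nhdsWithin] with η hgap hη
    filter_upwards [eventually_ge_atTop (c₀ + η / r ^ 2)] with c hc x hx hface hlt τ hτ hstat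
    have hslope := hstat.norm_comp_subtypeL_le hA hτ hx
    rw [hface] at hslope
    have hcoset : x - x₀ ∈ faceDirections (activeSet A x₀) := hface ▸ sub_mem_faceDirections hface
    have hvalue : τ < r → |quad g B x - v| ≤ c₀ * τ ^ 2 := fun hτr =>
      (hcrit x hcoset (hslope.trans_lt hτr)).trans (by gcongr)
    exact (sub_le_mul_sq_of_value_gap hη hr hc₀ hgap hlt hvalue).trans (by gcongr)
  · exact .of_forall fun _ => .of_forall fun _ x _ hface => absurd ⟨x, hface⟩ hs

theorem IsPolyhedron.exists_quad_sub_le_mul_sq {P : Set E} (hP : IsPolyhedron P) (g : E →L[ℝ] ℝ)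
    (B : E →L[ℝ] E →L[ℝ] ℝ) (F : ℝ) :
    ∃ η c : ℝ, 0 < η ∧ 0 ≤ c ∧ ∀ x ∈ P, quad g B x < F + η → ∀ τ, 0 ≤ τ →
      IsApproxStationary P (quadDeriv g B x) τ x → quad g B x - F ≤ c * τ ^ 2 := by
  obtain ⟨A, hA, rfl⟩ := hP
  have hfaces := (hA.finite_subsets.eventually_all).2 fun s _ =>
    eventually_sub_le_mul_sq_on_face g B hA s F
  obtain ⟨η, hη, hpos⟩ := (hfaces.and self_mem_nhdsWithin).exists
  obtain ⟨c, hc, hc₀⟩ :=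
    ((hA.finite_subsets.eventually_all.2 hη).and (eventually_ge_atTop 0)).exists
  exact ⟨η, c, hpos, hc₀, fun x hx => hc _ (Set.sep_subset _ _) x hx rfl⟩

end ErrorBound

section DescentSequence

lemma summable_sub_succ_of_antitone {s : ℕ → ℝ} (hs : Antitone s) (hnonneg : ∀ k, 0 ≤ s k) :
    Summable fun k => s k - s (k + 1) := by
  refine summable_of_sum_range_le (c := s 0) (fun k => sub_nonneg.2 (hs k.le_succ)) fun n => ?_
  rw [Finset.sum_range_sub']
  linarith [hnonneg n]

lemma le_mul_add_of_sq_le {A b κ d E u s : ℝ} (hA : 0 ≤ A) (hb : 0 ≤ b) (hκ : 0 ≤ κ) (hd : 0 ≤ d)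
    (hE : 0 ≤ E) (hu : 0 ≤ u) (hs : s ≤ κ * (d + E))
    (hsq : d ^ 2 ≤ A * (u * (u + 2 * s)) + b * E * d) :
    d ≤ (1 + A * (1 + 4 * κ) + b) * (u + E) := by
  by_contra! hlt
  have hA' : 0 ≤ A * (1 + 4 * κ) := by positivity
  have hsum : u + E ≤ (1 + A * (1 + 4 * κ) + b) * (u + E) :=
    le_mul_of_one_le_left (by positivity) (by linarith)
  have hsd : s ≤ 2 * κ * d := hs.trans (by nlinarith)
  have hgain : A * (u * (u + 2 * s)) ≤ A * (1 + 4 * κ) * u * d :=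
    calc A * (u * (u + 2 * s)) ≤ A * (u * (d + 2 * (2 * κ * d))) := by gcongr; linarith
      _ = A * (1 + 4 * κ) * u * d := by ring
  have hmain : A * (1 + 4 * κ) * u + b * E ≤ (1 + A * (1 + 4 * κ) + b) * (u + E) := by
    nlinarith [mul_nonneg hA' hE, mul_nonneg hb hu]
  have hd_pos : 0 < d := by linarith
  linarith [mul_lt_mul_of_pos_right hlt hd_pos, mul_le_mul_of_nonneg_right hmain hd]

/-- The Łojasiewicz argument with exponent `1/2`: the square root of the gap `r` telescopes and
dominates the step lengths `d`, up to the errors `E`. -/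
theorem summable_and_tendsto_zero_of_descent {r d E : ℕ → ℝ} {A b κ : ℝ} (hA : 0 ≤ A) (hb : 0 ≤ b)
    (hκ : 0 ≤ κ) (hr : ∀ k, 0 ≤ r k) (hanti : Antitone r) (hd : ∀ k, 0 ≤ d k) (hE : ∀ k, 0 ≤ E k)
    (hEsum : Summable E)
    (hdecrease : ∀ k, d k ^ 2 ≤ A * (r k - r (k + 1)) + b * E k * d k)
    (hgap : ∀ k, r (k + 1) ≤ (κ * (d k + E k)) ^ 2) :
    Summable d ∧ Tendsto r atTop (𝓝 0) := by
  have hsqrt : Antitone fun k => √(r k) := fun _ _ h => Real.sqrt_le_sqrt (hanti h)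
  have hstep : ∀ k, d k ≤ (1 + A * (1 + 4 * κ) + b) * ((√(r k) - √(r (k + 1))) + E k) := by
    intro k
    refine le_mul_add_of_sq_le hA hb hκ (hd k) (hE k) (sub_nonneg.2 (hsqrt k.le_succ))
      (Real.sqrt_le_iff.2 ⟨mul_nonneg hκ (add_nonneg (hd k) (hE k)), hgap k⟩) ?_
    convert hdecrease k using 3
    linear_combination Real.sq_sqrt (hr k) - Real.sq_sqrt (hr (k + 1))
  have hdsum : Summable d :=
    .of_nonneg_of_le hd hstep
      (((summable_sub_succ_of_antitone hsqrt fun _ => Real.sqrt_nonneg _).add hEsum).mul_left _)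
  have hbound : Tendsto (fun k => (κ * (d k + E k)) ^ 2) atTop (𝓝 0) := by
    simpa using (((hdsum.add hEsum).tendsto_atTop_zero).const_mul κ).pow 2
  exact ⟨hdsum, (tendsto_add_atTop_iff_nat 1).1 (squeeze_zero (fun k => hr (k + 1)) hgap hbound)⟩

end DescentSequence

section BlockProx

variable {m : ℕ} {H : Type*}

/-- The point at which a Gauss–Seidel sweep evaluates its objective: the blocks before `i` are
already updated to `Zn`, block `i` is `X`, and the blocks after `i` are still those of `Zo`. -/
def sweepPoint (Zo Zn : Fin m → H) (i : Fin m) (X : H) : Fin m → H :=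
  fun j => if j < i then Zn j else if j = i then X else Zo j

lemma sweepPoint_self (Y : Fin m → H) (i : Fin m) : sweepPoint Y Y i (Y i) = Y := by
  ext j
  grind [sweepPoint]

lemma sum_sweepPoint_sub (f : (Fin m → H) → ℝ) (Yo Y : Fin m → H) :
    ∑ i, (f (sweepPoint Yo Y i (Y i)) - f (sweepPoint Yo Y i (Yo i))) = f Y - f Yo := by
  set h : ℕ → Fin m → H := fun k j => if (j : ℕ) < k then Y j else Yo j with hh
  have hafter : ∀ i : Fin m, sweepPoint Yo Y i (Y i) = h (i + 1) := fun i => by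
    ext j
    grind [sweepPoint]
  have hbefore : ∀ i : Fin m, sweepPoint Yo Y i (Yo i) = h i := fun i => by
    ext j
    grind [sweepPoint]
  have hm : h m = Y := by simp [hh]
  have h0 : h 0 = Yo := by simp [hh]
  simp only [hafter, hbefore]
  rw [Fin.sum_univ_eq_sum_range (fun k => f (h (k + 1)) - f (h k)),
    Finset.sum_range_sub fun k => f (h k), hm, h0]

variable [NormedAddCommGroup H]

lemma sweepPoint_add (Zo Zn : Fin m → H) (i : Fin m) (X u : H) :
    sweepPoint Zo Zn i (X + u) = sweepPoint Zo Zn i X + Pi.single i u := by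
  ext j
  rcases lt_trichotomy j i with h | rfl | h
  · simp [sweepPoint, h, h.ne]
  · simp [sweepPoint]
  · simp [sweepPoint, h.not_gt, h.ne']

lemma norm_sweepPoint_sub_le (Zo Zn Yo Y : Fin m → H) (i : Fin m) (X : H) :
    ‖sweepPoint Yo Y i X - sweepPoint Zo Zn i X‖ ≤ ‖Yo - Zo‖ + ‖Y - Zn‖ := by
  refine (pi_norm_le_iff_of_nonneg (by positivity)).2 fun j => ?_
  have ho := norm_le_pi_norm (Yo - Zo) j
  have hn := norm_le_pi_norm (Y - Zn) j
  rw [Pi.sub_apply] at ho hn ⊢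
  unfold sweepPoint
  split_ifs
  · linarith [norm_nonneg (Yo - Zo)]
  · rw [sub_self, norm_zero]
    positivity
  · linarith [norm_nonneg (Y - Zn)]

/-- `Y` collects the exact solutions of the proximal block problems on `S` for the inexact sweep
from `Zo` to `Zn`. -/
def IsBlockProxMin (f : (Fin m → H) → ℝ) (S : Set H) (σ : ℝ) (Zo Zn Y : Fin m → H) : Prop :=
  ∀ i, Y i ∈ S ∧ ∀ X ∈ S, f (sweepPoint Zo Zn i (Y i)) + σ / 2 * ‖Y i - Zo i‖ ^ 2 ≤
    f (sweepPoint Zo Zn i X) + σ / 2 * ‖X - Zo i‖ ^ 2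

lemma nonneg_of_mul_add_sq_mul_nonneg {a b : ℝ}
    (h : ∀ t : ℝ, 0 < t → t ≤ 1 → 0 ≤ t * a + t ^ 2 * b) : 0 ≤ a := by
  have hlim : Tendsto (fun t : ℝ => a + t * b) (𝓝[>] 0) (𝓝 a) :=
    (Continuous.tendsto' (by fun_prop) 0 a (by simp)).mono_left nhdsWithin_le_nhds
  refine ge_of_tendsto hlim ?_
  filter_upwards [Ioc_mem_nhdsGT one_pos] with t ht
  refine nonneg_of_mul_nonneg_right ?_ ht.1
  linarith [h t ht.1 ht.2]

variable [InnerProductSpace ℝ H] {g : (Fin m → H) →L[ℝ] ℝ}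
  {B : (Fin m → H) →L[ℝ] (Fin m → H) →L[ℝ] ℝ} {S : Set H} {σ : ℝ} {Zo Zn Y : Fin m → H}

lemma half_mul_norm_add_sq_sub (σ : ℝ) (x u : H) :
    σ / 2 * ‖x + u‖ ^ 2 - σ / 2 * ‖x‖ ^ 2 = σ * inner ℝ x u + σ / 2 * ‖u‖ ^ 2 := by
  rw [norm_add_sq_real]
  ring

lemma IsBlockProxMin.variational_inequality (hS : Convex ℝ S)
    (h : IsBlockProxMin (quad g B) S σ Zo Zn Y) (i : Fin m) {X : H} (hX : X ∈ S) :
    0 ≤ quadDeriv g B (sweepPoint Zo Zn i (Y i)) (Pi.single i (X - Y i)) +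
      σ * inner ℝ (Y i - Zo i) (X - Y i) := by
  set u : Fin m → H := Pi.single i (X - Y i)
  refine nonneg_of_mul_add_sq_mul_nonneg (b := B u u + σ / 2 * ‖X - Y i‖ ^ 2) fun t ht ht1 => ?_
  have hmin := (h i).2 _ (hS.add_smul_sub_mem (h i).1 hX ⟨ht.le, ht1⟩)
  have hprox := half_mul_norm_add_sq_sub σ (Y i - Zo i) (t • (X - Y i))
  have hsingle : Pi.single i (t • (X - Y i)) = t • u := Pi.single_smul' i t (X - Y i)
  rw [sweepPoint_add, quad_add, hsingle, add_sub_right_comm] at hmin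
  simp only [map_smul, _root_.smul_apply, smul_eq_mul, inner_smul_right, norm_smul,
    Real.norm_of_nonneg ht.le, mul_pow] at hmin hprox
  linarith

/-- The Lipschitz constant, in the sup norm on `m` blocks, of the errors committed by an inexact
proximal sweep on a quadratic function with bilinear part `B`. -/
def sweepConst (B : (Fin m → H) →L[ℝ] (Fin m → H) →L[ℝ] ℝ) (σ : ℝ) : ℝ := m * (quadLip B + σ)

lemma IsBlockProxMin.neg_le_quadDeriv_single (hσ : 0 ≤ σ) (hS : Convex ℝ S)
    (h : IsBlockProxMin (quad g B) S σ Zo Zn Y) (i : Fin m) {X : H} (hX : X ∈ S) :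
    -((quadLip B + σ) * (‖Y - Zo‖ + ‖Y - Zn‖) * ‖X - Y i‖) ≤
      quadDeriv g B Y (Pi.single i (X - Y i)) := by
  have hL := quadLip_nonneg B
  have hYo : ‖Y i - Zo i‖ ≤ ‖Y - Zo‖ + ‖Y - Zn‖ :=
    (norm_le_pi_norm (Y - Zo) i).trans (le_add_of_nonneg_right (norm_nonneg _))
  have hpoint : ‖Y - sweepPoint Zo Zn i (Y i)‖ ≤ ‖Y - Zo‖ + ‖Y - Zn‖ := by
    simpa only [sweepPoint_self] using norm_sweepPoint_sub_le Zo Zn Y Y i (Y i)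
  have hderiv : quadDeriv g B (sweepPoint Zo Zn i (Y i)) (Pi.single i (X - Y i)) -
      quadDeriv g B Y (Pi.single i (X - Y i)) ≤
        quadLip B * (‖Y - Zo‖ + ‖Y - Zn‖) * ‖X - Y i‖ := by
    refine (le_abs_self _).trans ((abs_quadDeriv_sub_apply_le ..).trans ?_)
    rw [norm_sub_rev, Pi.norm_single]
    gcongr
  have hinner : σ * inner ℝ (Y i - Zo i) (X - Y i) ≤
      σ * ((‖Y - Zo‖ + ‖Y - Zn‖) * ‖X - Y i‖) := by
    gcongr
    exact (real_inner_le_norm _ _).trans (by gcongr)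
  linarith [h.variational_inequality hS i hX]

theorem IsBlockProxMin.isApproxStationary (hσ : 0 ≤ σ) (hS : Convex ℝ S)
    (h : IsBlockProxMin (quad g B) S σ Zo Zn Y) :
    IsApproxStationary {Z | ∀ i, Z i ∈ S} (quadDeriv g B Y)
      (sweepConst B σ * (‖Y - Zo‖ + ‖Y - Zn‖)) Y := by
  intro W hW
  have hL := quadLip_nonneg B
  calc -(sweepConst B σ * (‖Y - Zo‖ + ‖Y - Zn‖) * ‖W - Y‖)
      = ∑ _i : Fin m, -((quadLip B + σ) * (‖Y - Zo‖ + ‖Y - Zn‖) * ‖W - Y‖) := by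
        simp only [sweepConst, Finset.sum_const, Finset.card_univ, Fintype.card_fin, nsmul_eq_mul]
        ring
    _ ≤ ∑ i, -((quadLip B + σ) * (‖Y - Zo‖ + ‖Y - Zn‖) * ‖W i - Y i‖) := by
        gcongr with i
        exact norm_le_pi_norm (W - Y) i
    _ ≤ ∑ i, quadDeriv g B Y (Pi.single i (W i - Y i)) :=
        Finset.sum_le_sum fun i _ => h.neg_le_quadDeriv_single hσ hS i (hW i)
    _ = quadDeriv g B Y (W - Y) := by
        rw [← map_sum]
        exact congrArg _ (Finset.univ_sum_single (W - Y))

/-- Comparing with `Yo i` rather than with `Zo i` makes the error a product of the inexactness and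
the step length; a bare inexactness term would not be absorbed by the square-root argument. -/
lemma IsBlockProxMin.block_decrease (hσ : 0 ≤ σ) (h : IsBlockProxMin (quad g B) S σ Zo Zn Y)
    {Yo : Fin m → H} {i : Fin m} (hYo : Yo i ∈ S) :
    quad g B (sweepPoint Yo Y i (Y i)) - quad g B (sweepPoint Yo Y i (Yo i)) ≤
      (quadLip B + σ) * (‖Yo - Zo‖ + ‖Y - Zn‖) * ‖Y i - Yo i‖ - σ / 2 * ‖Y i - Yo i‖ ^ 2 := by
  obtain ⟨u, hu⟩ : ∃ u, Y i = Yo i + u := ⟨Y i - Yo i, by abel⟩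
  have hL := quadLip_nonneg B
  have hmin := (h i).2 _ hYo
  have hprox := half_mul_norm_add_sq_sub σ (Yo i - Zo i) u
  have herror : ‖Yo i - Zo i‖ ≤ ‖Yo - Zo‖ + ‖Y - Zn‖ :=
    (norm_le_pi_norm (Yo - Zo) i).trans (le_add_of_nonneg_right (norm_nonneg _))
  have hinner : -(σ * inner ℝ (Yo i - Zo i) u) ≤ σ * ((‖Yo - Zo‖ + ‖Y - Zn‖) * ‖u‖) := by
    rw [← mul_neg, ← inner_neg_left]
    gcongr
    exact (real_inner_le_norm _ _).trans (by rw [norm_neg]; gcongr)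
  have hderiv : quadDeriv g B (sweepPoint Yo Y i (Yo i)) (Pi.single i u) -
      quadDeriv g B (sweepPoint Zo Zn i (Yo i)) (Pi.single i u) ≤
        quadLip B * (‖Yo - Zo‖ + ‖Y - Zn‖) * ‖u‖ := by
    refine (le_abs_self _).trans ((abs_quadDeriv_sub_apply_le ..).trans ?_)
    rw [Pi.norm_single]
    gcongr
    exact norm_sweepPoint_sub_le Zo Zn Yo Y i (Yo i)
  rw [hu, sweepPoint_add, quad_add, add_sub_right_comm] at hmin
  rw [hu, sweepPoint_add, quad_add, add_sub_cancel_left]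
  linarith

lemma pi_norm_le_sqrt_sum_sq {ι G : Type*} [Fintype ι] [SeminormedAddGroup G] (x : ι → G) :
    ‖x‖ ≤ √(∑ i, ‖x i‖ ^ 2) :=
  (pi_norm_le_iff_of_nonneg (Real.sqrt_nonneg _)).2 fun i => Real.le_sqrt_of_sq_le
    (Finset.single_le_sum (f := fun j => ‖x j‖ ^ 2) (fun j _ => sq_nonneg ‖x j‖) (mem_univ i))

theorem IsBlockProxMin.sufficient_decrease (hσ : 0 ≤ σ) (h : IsBlockProxMin (quad g B) S σ Zo Zn Y)
    {Yo : Fin m → H} (hYo : ∀ i, Yo i ∈ S) :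
    σ / 2 * ‖Y - Yo‖ ^ 2 ≤ quad g B Yo - quad g B Y +
      sweepConst B σ * (‖Yo - Zo‖ + ‖Y - Zn‖) * ‖Y - Yo‖ := by
  have hL := quadLip_nonneg B
  have hsq : ‖Y - Yo‖ ^ 2 ≤ ∑ i, ‖Y i - Yo i‖ ^ 2 :=
    (Real.le_sqrt (norm_nonneg _) (by positivity)).1 (pi_norm_le_sqrt_sum_sq (Y - Yo))
  have hsum : quad g B Y - quad g B Yo ≤
      sweepConst B σ * (‖Yo - Zo‖ + ‖Y - Zn‖) * ‖Y - Yo‖ - σ / 2 * ∑ i, ‖Y i - Yo i‖ ^ 2 :=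
    calc quad g B Y - quad g B Yo
        = ∑ i, (quad g B (sweepPoint Yo Y i (Y i)) - quad g B (sweepPoint Yo Y i (Yo i))) :=
          (sum_sweepPoint_sub (quad g B) Yo Y).symm
      _ ≤ ∑ i, ((quadLip B + σ) * (‖Yo - Zo‖ + ‖Y - Zn‖) * ‖Y - Yo‖ -
            σ / 2 * ‖Y i - Yo i‖ ^ 2) := by
          refine Finset.sum_le_sum fun i _ => (h.block_decrease hσ (hYo i)).trans ?_
          gcongr
          exact norm_le_pi_norm (Y - Yo) i
      _ = _ := by
          simp only [sweepConst, Finset.sum_sub_distrib, Finset.sum_const, Finset.card_univ,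
            Fintype.card_fin, nsmul_eq_mul, ← Finset.mul_sum]
          ring
  nlinarith

end BlockProx

section LocalConvergence

lemma exists_tendsto_of_summable_norm_sub {E : Type*} [NormedAddCommGroup E] [CompleteSpace E]
    {Z Y : ℕ → E} (hstep : Summable fun k => ‖Y (k + 1) - Y k‖)
    (herror : Summable fun k => ‖Y k - Z k‖) :
    ∃ L, Tendsto Y atTop (𝓝 L) ∧ Tendsto Z atTop (𝓝 L) := by
  have hcauchy : CauchySeq Y := cauchySeq_of_summable_dist <| by
    simpa only [dist_eq_norm, norm_sub_rev] using hstep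
  obtain ⟨L, hL⟩ := cauchySeq_tendsto_of_complete hcauchy
  have hdiff : Tendsto (fun k => Y k - Z k) atTop (𝓝 0) :=
    tendsto_zero_iff_norm_tendsto_zero.2 herror.tendsto_atTop_zero
  exact ⟨L, hL, by simpa using hL.sub hdiff⟩

variable {m : ℕ} {H : Type*} [NormedAddCommGroup H] [InnerProductSpace ℝ H]
  {g : (Fin m → H) →L[ℝ] ℝ} {B : (Fin m → H) →L[ℝ] (Fin m → H) →L[ℝ] ℝ} {S : Set H} {σ : ℝ}

lemma sweepConst_nonneg (B : (Fin m → H) →L[ℝ] (Fin m → H) →L[ℝ] ℝ) (hσ : 0 ≤ σ) :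
    0 ≤ sweepConst B σ :=
  mul_nonneg m.cast_nonneg (add_nonneg (quadLip_nonneg B) hσ)

lemma IsBlockProxMin.quad_le_add (hσ : 0 < σ) {Zo Zn Y : Fin m → H} (hZo : ∀ i, Zo i ∈ S)
    (h : IsBlockProxMin (quad g B) S σ Zo Zn Y) :
    quad g B Y ≤ quad g B Zo + (sweepConst B σ * ‖Y - Zn‖) ^ 2 / (2 * σ) := by
  have hdecrease := h.sufficient_decrease hσ.le hZo
  rw [sub_self, norm_zero, zero_add] at hdecrease
  have hyoung : sweepConst B σ * ‖Y - Zn‖ * ‖Y - Zo‖ ≤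
      (sweepConst B σ * ‖Y - Zn‖) ^ 2 / (2 * σ) + σ / 2 * ‖Y - Zo‖ ^ 2 := by
    rw [← sub_nonneg]
    have hsquare : (sweepConst B σ * ‖Y - Zn‖) ^ 2 / (2 * σ) + σ / 2 * ‖Y - Zo‖ ^ 2 -
        sweepConst B σ * ‖Y - Zn‖ * ‖Y - Zo‖ =
          (sweepConst B σ * ‖Y - Zn‖ - σ * ‖Y - Zo‖) ^ 2 / (2 * σ) := by
      field_simp
      ring
    rw [hsquare]
    positivity
  linarith

lemma IsBlockProxMin.quad_sub_le_sq (hσ : 0 ≤ σ) (hS : Convex ℝ S) {F c : ℝ} (hc : 0 ≤ c)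
    {Zo Zn Yo Y : Fin m → H} (h : IsBlockProxMin (quad g B) S σ Zo Zn Y)
    (hbound : ∀ τ, 0 ≤ τ → IsApproxStationary {Z | ∀ i, Z i ∈ S} (quadDeriv g B Y) τ Y →
      quad g B Y - F ≤ c * τ ^ 2) :
    quad g B Y - F ≤
      (√c * sweepConst B σ * (‖Y - Yo‖ + (‖Yo - Zo‖ + ‖Y - Zn‖))) ^ 2 := by
  have hQ := sweepConst_nonneg B hσ
  refine (hbound _ (by positivity) (h.isApproxStationary hσ hS)).trans ?_
  have htriangle : ‖Y - Zo‖ + ‖Y - Zn‖ ≤ ‖Y - Yo‖ + (‖Yo - Zo‖ + ‖Y - Zn‖) := by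
    linarith [norm_sub_le_norm_sub_add_norm_sub Y Yo Zo]
  rw [mul_assoc, mul_pow (√c), Real.sq_sqrt hc]
  gcongr c * (_ * ?_) ^ 2

theorem tendsto_of_isBlockProxMin [CompleteSpace H] (hσ : 0 < σ) (hconv : Convex ℝ S)
    (hclosed : IsClosed S) {F η c : ℝ} (hc : 0 ≤ c) (hF : ∀ W, (∀ i, W i ∈ S) → F ≤ quad g B W)
    (hbound : ∀ W ∈ {Z : Fin m → H | ∀ i, Z i ∈ S}, quad g B W < F + η → ∀ τ, 0 ≤ τ →
      IsApproxStationary {Z | ∀ i, Z i ∈ S} (quadDeriv g B W) τ W → quad g B W - F ≤ c * τ ^ 2)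
    {Z Y : ℕ → Fin m → H}
    (hopt : ∀ k, IsBlockProxMin (quad g B) S σ (Z k) (Z (k + 1)) (Y (k + 1)))
    (hY₀ : ∀ i, Y 0 i ∈ S) (hanti : Antitone fun k => quad g B (Y k))
    (herror : Summable fun k => ‖Y k - Z k‖) (hstart : quad g B (Y 0) < F + η) :
    ∃ Zopt : Fin m → H, (∀ i, Zopt i ∈ S) ∧ quad g B Zopt = F ∧ Tendsto Z atTop (𝓝 Zopt) := by
  have hY : ∀ k i, Y k i ∈ S := fun k => k.casesOn hY₀ fun k i => (hopt k i).1
  have hQ := sweepConst_nonneg B hσ.le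
  have hdecrease : ∀ k, ‖Y (k + 1) - Y k‖ ^ 2 ≤
      2 / σ * ((quad g B (Y k) - F) - (quad g B (Y (k + 1)) - F)) +
        2 / σ * sweepConst B σ * (‖Y k - Z k‖ + ‖Y (k + 1) - Z (k + 1)‖) * ‖Y (k + 1) - Y k‖ := by
    intro k
    have h := mul_le_mul_of_nonneg_left ((hopt k).sufficient_decrease hσ.le (hY k))
      (show 0 ≤ 2 / σ by positivity)
    rw [← mul_assoc, div_mul_div_cancel₀' two_ne_zero, div_self hσ.ne', one_mul] at h
    linarith
  obtain ⟨hstep, hvalue⟩ := summable_and_tendsto_zero_of_descent (A := 2 / σ)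
    (b := 2 / σ * sweepConst B σ) (κ := √c * sweepConst B σ)
    (r := fun k => quad g B (Y k) - F) (by positivity) (by positivity) (by positivity)
    (fun k => sub_nonneg.2 (hF _ (hY k))) (fun _ _ hkl => sub_le_sub_right (hanti hkl) F)
    (fun _ => norm_nonneg _) (fun _ => by positivity)
    (herror.add ((summable_nat_add_iff 1).2 herror)) hdecrease
    (fun k => (hopt k).quad_sub_le_sq hσ.le hconv hc <|
      hbound _ (hY (k + 1)) ((hanti (Nat.zero_le _)).trans_lt hstart))
  obtain ⟨L, hYL, hZL⟩ := exists_tendsto_of_summable_norm_sub hstep herror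
  refine ⟨L, fun i => hclosed.mem_of_tendsto ((tendsto_pi_nhds.1 hYL) i)
    (.of_forall fun k => hY k i), ?_, hZL⟩
  exact sub_eq_zero.1 <|
    tendsto_nhds_unique (((continuous_quad g B).tendsto L).comp hYL |>.sub_const F) hvalue

theorem exists_pos_forall_tendsto_of_isBlockProxMin [FiniteDimensional ℝ H]
    (g : (Fin m → H) →L[ℝ] ℝ) (B : (Fin m → H) →L[ℝ] (Fin m → H) →L[ℝ] ℝ) (hS : IsPolyhedron S)
    (hσ : 0 < σ) {Zs : Fin m → H} (hmin : ∀ Z, (∀ i, Z i ∈ S) → quad g B Zs ≤ quad g B Z) :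
    ∃ ε > 0, ∃ δ > 0, ∀ Z Y : ℕ → Fin m → H,
      (∀ k, IsBlockProxMin (quad g B) S σ (Z k) (Z (k + 1)) (Y (k + 1))) →
      (Antitone fun k => quad g B (Y (k + 1))) →
      (Summable fun k => ‖Y (k + 1) - Z (k + 1)‖) →
      ∑' k, ‖Y (k + 1) - Z (k + 1)‖ ≤ δ → (∀ i, Z 0 i ∈ S) → ‖Z 0 - Zs‖ < ε →
      ∃ Zopt : Fin m → H, (∀ i, Zopt i ∈ S) ∧ quad g B Zopt = quad g B Zs ∧
        Tendsto Z atTop (𝓝 Zopt) := by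
  have : CompleteSpace H := FiniteDimensional.complete ℝ H
  obtain ⟨η, c, hη, hc, hbound⟩ := hS.pi.exists_quad_sub_le_mul_sq g B (quad g B Zs)
  obtain ⟨ε, hε, hnear⟩ := Metric.eventually_nhds_iff.1 <|
    ((continuous_quad g B).tendsto Zs).eventually_lt_const
      (show quad g B Zs < quad g B Zs + η / 2 by linarith)
  have hsmall : Tendsto (fun δ => (sweepConst B σ * δ) ^ 2 / (2 * σ)) (𝓝[>] 0) (𝓝 0) :=
    (Continuous.tendsto' (by fun_prop) 0 0 (by simp)).mono_left nhdsWithin_le_nhds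
  obtain ⟨δ, hδη, hδ⟩ :=
    ((hsmall.eventually_lt_const (half_pos hη)).and self_mem_nhdsWithin).exists
  refine ⟨ε, hε, δ, hδ, fun Z Y hopt hanti herror hsum hZ₀ hclose => ?_⟩
  have hQ := sweepConst_nonneg B hσ.le
  have hfirst : ‖Y 1 - Z 1‖ ≤ δ := (herror.le_tsum 0 fun _ _ => norm_nonneg _).trans hsum
  have hstart : quad g B (Y 1) < quad g B Zs + η :=
    calc quad g B (Y 1)
        ≤ quad g B (Z 0) + (sweepConst B σ * ‖Y 1 - Z 1‖) ^ 2 / (2 * σ) :=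
          (hopt 0).quad_le_add hσ hZ₀
      _ ≤ quad g B (Z 0) + (sweepConst B σ * δ) ^ 2 / (2 * σ) := by gcongr
      _ < (quad g B Zs + η / 2) + η / 2 :=
          add_lt_add (hnear (by rwa [dist_eq_norm])) hδη
      _ = quad g B Zs + η := by ring
  obtain ⟨Zopt, hmem, hvalue, hlim⟩ := tendsto_of_isBlockProxMin hσ hS.convex hS.isClosed hc hmin
    hbound (Z := fun k => Z (k + 1)) (Y := fun k => Y (k + 1)) (fun k => hopt (k + 1))
    (fun i => (hopt 0 i).1) hanti herror hstart
  exact ⟨Zopt, hmem, hvalue, (tendsto_add_atTop_iff_nat 1).1 hlim⟩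

end LocalConvergence

section FrobeniusSpace

variable {K m : ℕ}

lemma mip_eq_sum (A B : Matrix (Fin K) (Fin K) ℝ) : mip A B = ∑ b, ∑ a, A a b * B a b := by
  simp [mip, Matrix.trace, Matrix.mul_apply]

attribute [local instance] Matrix.frobeniusNormedAddCommGroup Matrix.frobeniusNormedSpace

lemma frobenius_norm_sq (A : Matrix (Fin K) (Fin K) ℝ) : ‖A‖ ^ 2 = mip A A := by
  rw [Matrix.frobenius_norm_def, ← Real.sqrt_eq_rpow, Real.sq_sqrt (by positivity), Finset.sum_comm,
    mip_eq_sum]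
  simp [sq]

/-- The trace inner product `mip`, compatible with Mathlib's Frobenius norm. -/
abbrev frobeniusInnerProductSpace : InnerProductSpace ℝ (Matrix (Fin K) (Fin K) ℝ) where
  inner := mip
  norm_sq_eq_re_inner := frobenius_norm_sq
  conj_inner_symm A B := by simp [mip_eq_sum, mul_comm]
  add_left A B C := by simp [mip_eq_sum, add_mul, Finset.sum_add_distrib]
  smul_left A B r := by simp [mip_eq_sum, Finset.mul_sum, mul_assoc]

attribute [local instance] frobeniusInnerProductSpace

lemma pi_norm_le_nZ (Z : Fin m → Matrix (Fin K) (Fin K) ℝ) : ‖Z‖ ≤ nZ Z := by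
  simpa only [nZ, frobenius_norm_sq] using pi_norm_le_sqrt_sum_sq Z

lemma isPolyhedron_Sset (e ϱ : Fin K → ℝ) : IsPolyhedron (Sset e ϱ) := by
  have hnonneg : IsPolyhedron {W : Matrix (Fin K) (Fin K) ℝ | ∀ a b, 0 ≤ W a b} := by
    simp only [Set.ofPred_forall]
    exact .iInter fun a => .iInter fun b => isPolyhedron_setOf_le (entryLinearMap ℝ ℝ a b) 0
  have hvecMul := isPolyhedron_setOf_eq_pi (vecMulBilin ℝ ℝ fun j => e j * ϱ j) ϱ
  have htrace := isPolyhedron_setOf_eq (traceLinearMap (Fin K) ℝ ℝ) 0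
  have hmulVec := isPolyhedron_setOf_eq_pi ((mulVecBilin ℝ ℝ).flip e) fun _ : Fin K => 1
  convert hmulVec.inter (hvecMul.inter (htrace.inter hnonneg)) using 1
  ext W
  simp [Sset, mulVec_transpose]

lemma exists_fB_eq_quad (e ϱ : Fin K → ℝ) (C : Matrix (Fin K) (Fin K) ℝ) (β : ℝ) :
    ∃ (g : (Fin m → Matrix (Fin K) (Fin K) ℝ) →L[ℝ] ℝ)
      (B : (Fin m → Matrix (Fin K) (Fin K) ℝ) →L[ℝ] (Fin m → Matrix (Fin K) (Fin K) ℝ) →L[ℝ] ℝ),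
      fB e ϱ C β = quad g B := by
  let proj : Fin m → (Fin m → Matrix (Fin K) (Fin K) ℝ) →ₗ[ℝ] Matrix (Fin K) (Fin K) ℝ :=
    LinearMap.proj
  let ip : Matrix (Fin K) (Fin K) ℝ →ₗ[ℝ] Matrix (Fin K) (Fin K) ℝ →ₗ[ℝ] ℝ := innerₗ _
  let g := ∑ i, ip.flip (diagonal ϱ * diagonal e * C * diagonal e) ∘ₗ proj i
  let T := LinearMap.mulLeftRight ℝ (diagonal e * diagonal ϱ, diagonal e * C * diagonal e) +
    β • LinearMap.id
  let B := ∑ i, ∑ j ∈ Finset.Ioi i, ip.compl₁₂ (proj i) (T ∘ₗ proj j)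
  refine ⟨g.toContinuousLinearMap, B.toContinuousBilinearMap, funext fun Z => ?_⟩
  have hT (X : Matrix (Fin K) (Fin K) ℝ) :
      T X = diagonal e * diagonal ϱ * X * diagonal e * C * diagonal e + β • X := by
    simp only [T, LinearMap.add_apply, LinearMap.mulLeftRight_apply, LinearMap.smul_apply,
      LinearMap.id_apply, Matrix.mul_assoc]
  have hip (X M Y : Matrix (Fin K) (Fin K) ℝ) : ip X (M + β • Y) = mip X M + β * mip X Y := by
    rw [map_add, map_smul]
    rfl
  have hg : g Z = ∑ i, mip (Z i) (diagonal ϱ * diagonal e * C * diagonal e) := by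
    rw [LinearMap.sum_apply]
    rfl
  have hB : B Z Z = ∑ i, ∑ j ∈ Finset.Ioi i, ip (Z i) (T (Z j)) := by
    simp only [B, LinearMap.sum_apply]
    rfl
  change fB e ϱ C β Z = g Z + B Z Z
  simp only [hg, hB, hT, hip, fB, fE, Finset.sum_add_distrib, Finset.mul_sum, add_assoc]

lemma isBlockOpt_iff {e ϱ : Fin K → ℝ} {C : Matrix (Fin K) (Fin K) ℝ} {β σ : ℝ}
    {Zseq Zbar : ℕ → Fin m → Matrix (Fin K) (Fin K) ℝ} :
    IsBlockOpt e ϱ C β σ Zseq Zbar ↔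
      ∀ k, IsBlockProxMin (fB e ϱ C β) (Sset e ϱ) σ (Zseq k) (Zseq (k + 1)) (Zbar (k + 1)) := by
  simp only [IsBlockProxMin, frobenius_norm_sq]
  rfl

theorem pbcd_inexact_convergence_to_global_minimizer_general (e ϱ : Fin K → ℝ)
    (C : Matrix (Fin K) (Fin K) ℝ) (β : ℝ) {σ : ℝ} (hσ : 0 < σ)
    {Zstar : Fin m → Matrix (Fin K) (Fin K) ℝ}
    (hmin : ∀ Z : Fin m → Matrix (Fin K) (Fin K) ℝ,
      (∀ i, Z i ∈ Sset e ϱ) → fB e ϱ C β Zstar ≤ fB e ϱ C β Z) :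
    ∃ ε > 0, ∃ δ > 0, ∀ Zseq Zbar : ℕ → Fin m → Matrix (Fin K) (Fin K) ℝ,
      IsBlockOpt e ϱ C β σ Zseq Zbar →
      (∀ k : ℕ, 1 ≤ k → fB e ϱ C β (Zbar (k + 1)) ≤ fB e ϱ C β (Zbar k)) →
      (Summable fun k : ℕ => nZ (Zbar (k + 1) - Zseq (k + 1))) →
      ∑' k : ℕ, nZ (Zbar (k + 1) - Zseq (k + 1)) ≤ δ →
      (∀ i, Zseq 0 i ∈ Sset e ϱ) →
      nZ (Zseq 0 - Zstar) < ε →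
      ∃ Zopt : Fin m → Matrix (Fin K) (Fin K) ℝ,
        (∀ i, Zopt i ∈ Sset e ϱ) ∧
        (∀ Z : Fin m → Matrix (Fin K) (Fin K) ℝ,
          (∀ i, Z i ∈ Sset e ϱ) → fB e ϱ C β Zopt ≤ fB e ϱ C β Z) ∧
        Tendsto Zseq atTop (nhds Zopt) := by
  obtain ⟨g, B, hquad⟩ := exists_fB_eq_quad (m := m) e ϱ C β
  simp only [hquad] at hmin ⊢
  obtain ⟨ε, hε, δ, hδ, hlocal⟩ :=
    exists_pos_forall_tendsto_of_isBlockProxMin g B (isPolyhedron_Sset e ϱ) hσ hmin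
  refine ⟨ε, hε, δ, hδ, fun Zseq Zbar hopt hmono herror hsum hZ₀ hclose => ?_⟩
  have herror' : Summable fun k => ‖Zbar (k + 1) - Zseq (k + 1)‖ :=
    .of_nonneg_of_le (fun _ => norm_nonneg _) (fun _ => pi_norm_le_nZ _) herror
  obtain ⟨Zopt, hmem, hvalue, hlim⟩ := hlocal Zseq Zbar
    (hquad ▸ isBlockOpt_iff.1 hopt)
    (antitone_nat_of_succ_le fun k => hmono (k + 1) (Nat.le_add_left 1 k)) herror'
    ((herror'.tsum_le_tsum (fun _ => pi_norm_le_nZ _) herror).trans hsum) hZ₀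
    ((pi_norm_le_nZ _).trans_lt hclose)
  exact ⟨Zopt, hmem, fun Z hZ => hvalue.trans_le (hmin Z hZ), hlim⟩

end FrobeniusSpace

/-- Theorem 3.2, part 2.
There is a threshold `σ₀ > 0` such that for every `σ ≥ σ₀` and every global minimizer `Z*` of
`(P_β)` there exist `ε > 0` and `δ > 0` with the following property: any inexact PBCD sequence
`{Z^{(k)}}` whose block-optimal sequence `{Z̄^{(k)}}` satisfies (i) `{f_β(Z̄^{(k)})}` is
nonincreasing with limit `F̄` and `f_β(Z̄^{(k)}) > F̄` for all `k ≥ 1`,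
(ii) `Σ_{k≥1} ‖Z̄^{(k)} − Z^{(k)}‖_F ≤ δ`, and (iii) `Z^{(0)} ∈ S^{N−1}` with
`‖Z^{(0)} − Z*‖_F < ε`, converges to a global minimizer of `(P_β)`. -/
theorem pbcd_inexact_convergence_to_global_minimizer
    (K N : ℕ) (hK : 1 ≤ K) (hN : 3 ≤ N)
    (e ϱ : Fin K → ℝ) (he : ∀ a, 0 < e a) (hϱ : ∀ a, 0 ≤ ϱ a)
    (C : Matrix (Fin K) (Fin K) ℝ) (hCsym : Cᵀ = C)
    (hC0 : ∀ a b, 0 ≤ C a b) (hCd : ∀ a, C a a = 0)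
    (hS : (Sset e ϱ).Nonempty)
    (β : ℝ) (hβ : 0 < β) :
    ∃ σ₀ : ℝ, 0 < σ₀ ∧ ∀ σ : ℝ, σ₀ ≤ σ →
      ∀ Zstar : Fin (N - 1) → Matrix (Fin K) (Fin K) ℝ,
        (∀ i, Zstar i ∈ Sset e ϱ) →
        (∀ Z : Fin (N - 1) → Matrix (Fin K) (Fin K) ℝ,
          (∀ i, Z i ∈ Sset e ϱ) → fB e ϱ C β Zstar ≤ fB e ϱ C β Z) →
        ∃ ε : ℝ, 0 < ε ∧ ∃ δ : ℝ, 0 < δ ∧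
          ∀ (Zseq Zbar : ℕ → Fin (N - 1) → Matrix (Fin K) (Fin K) ℝ) (Fbar : ℝ),
            IsBlockOpt e ϱ C β σ Zseq Zbar →
            (∀ k : ℕ, 1 ≤ k → fB e ϱ C β (Zbar (k + 1)) ≤ fB e ϱ C β (Zbar k)) →
            Tendsto (fun k : ℕ => fB e ϱ C β (Zbar (k + 1))) atTop (nhds Fbar) →
            (∀ k : ℕ, 1 ≤ k → Fbar < fB e ϱ C β (Zbar k)) →
            Summable (fun k : ℕ => nZ (Zbar (k + 1) - Zseq (k + 1))) →
            (∑' k : ℕ, nZ (Zbar (k + 1) - Zseq (k + 1))) ≤ δ →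
            (∀ i, Zseq 0 i ∈ Sset e ϱ) →
            nZ (Zseq 0 - Zstar) < ε →
            ∃ Zopt : Fin (N - 1) → Matrix (Fin K) (Fin K) ℝ,
              (∀ i, Zopt i ∈ Sset e ϱ) ∧
              (∀ Z : Fin (N - 1) → Matrix (Fin K) (Fin K) ℝ,
                (∀ i, Z i ∈ Sset e ϱ) → fB e ϱ C β Zopt ≤ fB e ϱ C β Z) ∧
              Tendsto Zseq atTop (nhds Zopt) := by
  refine ⟨1, one_pos, fun σ hσ Zstar _ hmin => ?_⟩
  obtain ⟨ε, hε, δ, hδ, hlocal⟩ := pbcd_inexact_convergence_to_global_minimizer_general e ϱ C β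
    (one_pos.trans_le hσ) hmin
  exact ⟨ε, hε, δ, hδ, fun Zseq Zbar _ hopt hmono _ _ => hlocal Zseq Zbar hopt hmono⟩
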